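/- Let G = (V,E) be a finite simple graph with n vertices and m edges having a dominating clique K of order 3 (a dominating triangle). If m ≥ 3(n−3) + 1, then G is 3-antimagic. -/

import Mathlib

open Finset

/-- A finite simple graph `G` with `m` edges is *`C`-antimagic* if there is an injective
labelling of its edges by labels in `{1, 2, …, m + C}` such that the vertex sums
`σ(u) = ∑_{v : uv ∈ E} f(uv)` are pairwise distinct. -/
def IsCAntimagic {V : Type*} [Fintype V] [DecidableEq V] (G : SimpleGraph V)
    [DecidableRel G.Adj] (C : ℕ) : Prop :=
  ∃ f : Sym2 V → ℕ,
    Set.InjOn f ↑G.edgeFinset ∧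
    (∀ e ∈ G.edgeFinset, f e ∈ Finset.Icc 1 (G.edgeFinset.card + C)) ∧
    Function.Injective fun u : V => ∑ v ∈ G.neighborFinset u, f s(u, v)

/-!
Label the `m - 3` edges outside the triangle `K` by `1, …, m - 3` so that the sums at the
vertices outside `K` are pairwise at least `3` apart: choose one edge from each such vertex to `K`,
reserve the labels `1, 4, 7, …` for these spokes, label all other edges arbitrarily, and hand the
reserved labels to the spokes in the order of the partial sums. The triangle gets three labels
among the six largest, `m - 2, …, m + 3`. Any three consecutive integers contain at most one sum of
an outer vertex, which leaves enough freedom to avoid all of them, and giving the smaller labels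
to the edges at the vertices with smaller partial sums makes the three triangle sums distinct.
-/

section Spread

/-- The values of `σ` at any two distinct points of `s` differ by at least `d`. Stated additively,
as subtraction of natural numbers truncates. -/
def IsSpreadOn {α : Type*} (d : ℕ) (σ : α → ℕ) (s : Set α) : Prop :=
  s.Pairwise fun u v => σ u + d ≤ σ v ∨ σ v + d ≤ σ u

variable {α ι : Type*} {d n : ℕ} {σ : α → ℕ} {s : Set α}

theorem IsSpreadOn.injOn (hd : 0 < d) (hσ : IsSpreadOn d σ s) : Set.InjOn σ s := by
  intro u hu v hv huv
  by_contra hne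
  have := hσ hu hv hne
  omega

theorem IsSpreadOn.image_id (hσ : IsSpreadOn d σ s) : IsSpreadOn d id (σ '' s) := by
  rintro _ ⟨u, hu, rfl⟩ _ ⟨v, hv, rfl⟩ hne
  exact hσ hu hv (ne_of_apply_ne σ hne)

theorem exists_equiv_fin_monotone {β : Type*} [LinearOrder β] [Fintype ι]
    (hn : Fintype.card ι = n) (p : ι → β) : ∃ e : Fin n ≃ ι, Monotone (p ∘ e) :=
  let e := (Fintype.equivFinOfCardEq hn).symm
  ⟨(Tuple.sort (p ∘ e)).trans e, Tuple.monotone_sort (p ∘ e)⟩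

theorem exists_eq_triple_le_le {β : Type*} [LinearOrder β] [DecidableEq α] {K : Finset α}
    (hK : #K = 3) (p : α → β) :
    ∃ a b c, a ≠ b ∧ a ≠ c ∧ b ≠ c ∧ K = {a, b, c} ∧ p a ≤ p b ∧ p b ≤ p c := by
  obtain ⟨e, he⟩ := exists_equiv_fin_monotone (by simpa using hK) (fun v : K => p v)
  have hne {i j : Fin 3} (hij : i ≠ j) : (e i : α) ≠ e j := by simpa using hij
  have hab := hne (i := 0) (j := 1) (by decide)
  have hac := hne (i := 0) (j := 2) (by decide)
  have hbc := hne (i := 1) (j := 2) (by decide)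
  refine ⟨e 0, e 1, e 2, hab, hac, hbc, ?_, he (by decide), he (by decide)⟩
  refine (eq_of_subset_of_card_le ?_ ?_).symm
  · simp [insert_subset_iff]
  · rw [hK, card_eq_three.2 ⟨_, _, _, hab, hac, hbc, rfl⟩]

theorem isSpreadOn_add_mul_rank {p : ι → ℕ} {e : Fin n ≃ ι} (hp : Monotone (p ∘ e)) (d k : ℕ) :
    IsSpreadOn d (fun w => p w + (d * e.symm w + k)) Set.univ := by
  have gap {i j : Fin n} (hij : i < j) :
      p (e i) + (d * i + k) + d ≤ p (e j) + (d * j + k) := by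
    have hpij : p (e i) ≤ p (e j) := hp hij.le
    have hrank : d * (i + 1) ≤ d * j := Nat.mul_le_mul_left d hij
    linarith
  intro u _ v _ hne
  obtain huv | hvu := lt_or_gt_of_ne (e.symm.injective.ne hne)
  · exact .inl (by simpa using gap huv)
  · exact .inr (by simpa using gap hvu)

theorem exists_offsets_notMem {P : Set ℕ} (hP : IsSpreadOn 3 id P) (A B C : ℕ) :
    ∃ x y z, x < y ∧ y < z ∧ z ≤ 5 ∧ A + x + y ∉ P ∧ B + x + z ∉ P ∧ C + y + z ∉ P := by
  have atMostOne (k : ℕ) :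
      ¬(k ∈ P ∧ k + 1 ∈ P) ∧ ¬(k ∈ P ∧ k + 2 ∈ P) ∧ ¬(k + 1 ∈ P ∧ k + 2 ∈ P) := by
    refine ⟨fun h => ?_, fun h => ?_, fun h => ?_⟩ <;>
    · have := hP h.1 h.2 (by omega)
      simp only [id_eq] at this
      omega
  have hA := atMostOne (A + 2)
  have hB := atMostOne (B + 4)
  have hC := atMostOne (C + 6)
  by_contra hnone
  -- In these five triples the pair sums range over `2, 3, 4`, over `4, 5, 6` and over `6, 7, 8`,
  -- so each of the three conditions fails for at most one value of its pair sum.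
  have h₀₂₄ := fun h => hnone ⟨0, 2, 4, by decide, by decide, by decide, h⟩
  have h₀₂₅ := fun h => hnone ⟨0, 2, 5, by decide, by decide, by decide, h⟩
  have h₀₃₄ := fun h => hnone ⟨0, 3, 4, by decide, by decide, by decide, h⟩
  have h₁₂₄ := fun h => hnone ⟨1, 2, 4, by decide, by decide, by decide, h⟩
  have h₁₃₅ := fun h => hnone ⟨1, 3, 5, by decide, by decide, by decide, h⟩
  clear hnone atMostOne hP
  simp only [add_assoc, Nat.reduceAdd] at *
  grind

end Spread

theorem exists_forall_extend_injOn_mapsTo {ι α β : Type*} [Fintype ι] [Nonempty β]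
    {t : ι → α} {E : Finset α} {D L : Finset β} (ht : Function.Injective t) (htE : ∀ i, t i ∈ E)
    (hDL : D ⊆ L) (hD : #D ≤ Fintype.card ι) (hEL : #E ≤ #L) :
    ∃ h : α → β, ∀ c : ι → β, Function.Injective c → (∀ i, c i ∈ D) →
      Set.InjOn (Function.extend t c h) E ∧ Set.MapsTo (Function.extend t c h) E L := by
  classical
  have himage : univ.image t ⊆ E := by simpa [image_subset_iff] using htE
  have hcard : #(E \ univ.image t) ≤ #(L \ D) := by
    rw [card_sdiff_of_subset himage, card_sdiff_of_subset hDL, card_image_of_injective _ ht,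
      card_univ]
    omega
  obtain ⟨h, hmaps, hinj⟩ : ∃ h : α → β,
      ↑(E \ univ.image t) ⊆ h ⁻¹' ↑(L \ D) ∧ Set.InjOn h ↑(E \ univ.image t) :=
    (finite_toSet _).exists_injOn_of_encard_le
      (by simpa only [Set.encard_coe_eq_coe_finsetCard, Nat.cast_le] using hcard)
  refine ⟨h, fun c hc hcD => ?_⟩
  have hrest {e : α} (he : e ∉ univ.image t) : Function.extend t c h e = h e :=
    Function.extend_apply' _ _ _ (by simpa using he)
  have hmem {e : α} (he : e ∈ E \ univ.image t) : h e ∈ L \ D := hmaps he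
  constructor
  · rw [← union_sdiff_of_subset himage, coe_union,
      Set.injOn_union (disjoint_coe.2 disjoint_sdiff)]
    refine ⟨?_, ?_, ?_⟩
    · simp only [coe_image, coe_univ, Set.image_univ]
      rintro _ ⟨i, rfl⟩ _ ⟨j, rfl⟩ hij
      rw [ht.extend_apply, ht.extend_apply] at hij
      rw [hc hij]
    · exact hinj.congr fun e he => (hrest (mem_sdiff.1 he).2).symm
    · simp only [coe_image, coe_univ, Set.image_univ]
      rintro _ ⟨i, rfl⟩ e he heq
      rw [ht.extend_apply, hrest (mem_sdiff.1 he).2] at heq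
      exact (mem_sdiff.1 (hmem he)).2 (heq ▸ hcD i)
  · intro e he
    by_cases het : e ∈ univ.image t
    · obtain ⟨i, -, rfl⟩ := mem_image.1 het
      rw [ht.extend_apply]
      exact hDL (hcD i)
    · rw [hrest het]
      exact (mem_sdiff.1 (hmem (mem_sdiff.2 ⟨he, het⟩))).1

section Triple

variable {α : Type*} {a b c : α}

theorem sum_erase_triple {M : Type*} [DecidableEq α] [AddCommMonoid M] (hab : a ≠ b)
    (hac : a ≠ c) (hbc : b ≠ c) (φ : α → M) :
    ∑ v ∈ ({a, b, c} : Finset α).erase a, φ v = φ b + φ c := by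
  rw [erase_insert (by simp [hab, hac]), sum_pair hbc]

theorem exists_labelling_triple {β : Type*} (hab : a ≠ b) (hac : a ≠ c) (hbc : b ≠ c)
    (x y z : β) : ∃ t : Sym2 α → β, t s(a, b) = x ∧ t s(a, c) = y ∧ t s(b, c) = z := by
  classical
  exact ⟨fun e => if e = s(a, b) then x else if e = s(a, c) then y else z,
    by simp, by simp [hab, hbc.symm], by simp [hab.symm, hac.symm]⟩

end Triple

section Spokes

variable {V : Type*} {K : Finset V} {g : {v // v ∉ K} → V}

/-- The edge from a vertex `w` outside `K` to the neighbor `g w` chosen for it in `K`. -/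
def spoke (g : {v // v ∉ K} → V) (w : {v // v ∉ K}) : Sym2 V :=
  s(↑w, g w)

theorem spoke_eq_mk_iff (hg : ∀ w, g w ∈ K) {w w' : {v // v ∉ K}} {v : V} :
    spoke g w' = s(↑w, v) ↔ w' = w ∧ g w' = v := by
  have hne : g w' ≠ w := fun h => w.2 (h ▸ hg w')
  simp [spoke, hne, Subtype.ext_iff]

theorem spoke_injective (hg : ∀ w, g w ∈ K) : Function.Injective (spoke g) :=
  fun _ _ h => ((spoke_eq_mk_iff hg).1 h).1

end Spokes

section Graph

variable {V : Type*} [Fintype V] [DecidableEq V] (G : SimpleGraph V) [DecidableRel G.Adj]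
  (K : Finset V)

/-- The sum `σ(u)` of the labels of the edges at `u`. -/
def vertexSum (f : Sym2 V → ℕ) (u : V) : ℕ :=
  ∑ v ∈ G.neighborFinset u, f s(u, v)

/-- The edges with at least one endpoint outside `K`. -/
def outerEdges : Finset (Sym2 V) :=
  G.edgeFinset \ K.sym2

/-- `f` labels the edges with an endpoint outside `K` injectively by `1, 2, …`, without gaps.
Its values on all other edges are irrelevant. -/
structure IsOuterLabelling (f : Sym2 V → ℕ) : Prop where
  injOn : Set.InjOn f (outerEdges G K)
  mapsTo : Set.MapsTo f (outerEdges G K) (Icc 1 #(outerEdges G K))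

/-- The part of the vertex sum at `u` contributed by the neighbors of `u` outside `K`. -/
def outerSum (f : Sym2 V → ℕ) (u : V) : ℕ :=
  ∑ v ∈ G.neighborFinset u \ K, f s(u, v)

variable {G K}

theorem card_outerEdges_add_card_inter :
    #(outerEdges G K) + #(G.edgeFinset ∩ K.sym2) = #G.edgeFinset :=
  card_sdiff_add_card_inter _ _

theorem spoke_mem_outerEdges {g : {v // v ∉ K} → V} (hadj : ∀ w : {v // v ∉ K}, G.Adj w (g w))
    (w : {v // v ∉ K}) : spoke g w ∈ outerEdges G K := by
  simp [spoke, outerEdges, hadj w, w.2]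

theorem vertexSum_extend_spoke {g : {v // v ∉ K} → V} (hg : ∀ w, g w ∈ K)
    (hadj : ∀ w : {v // v ∉ K}, G.Adj w (g w)) (c : {v // v ∉ K} → ℕ) (h : Sym2 V → ℕ)
    (w : {v // v ∉ K}) :
    vertexSum G (Function.extend (spoke g) c h) w =
      ∑ v ∈ (G.neighborFinset w).erase (g w), h s(↑w, v) + c w := by
  rw [vertexSum, ← sum_erase_add _ _ ((G.mem_neighborFinset _ _).2 (hadj w))]
  congr 1
  · refine sum_congr rfl fun v hv => Function.extend_apply' _ _ _ ?_
    rintro ⟨w', hw'⟩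
    obtain ⟨rfl, rfl⟩ := (spoke_eq_mk_iff hg).1 hw'
    exact notMem_erase _ _ hv
  · exact (spoke_injective hg).extend_apply c h w

theorem exists_isSpreadOn_vertexSum_compl {d : ℕ} (hd : 0 < d)
    (hdom : ∀ v ∉ K, ∃ u ∈ K, G.Adj v u) (hcard : d * #Kᶜ + 1 ≤ #(outerEdges G K) + d) :
    ∃ f : Sym2 V → ℕ, IsOuterLabelling G K f ∧ IsSpreadOn d (vertexSum G f) (↑K)ᶜ := by
  choose g hgK hadj using fun w : {v // v ∉ K} => hdom w w.2
  have hcompl : Fintype.card {v // v ∉ K} = #Kᶜ := by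
    rw [Fintype.card_subtype_compl, card_compl, Fintype.card_coe]
  let reserved (i : Fin #Kᶜ) : ℕ := d * i + 1
  have hreserved : Function.Injective reserved := fun i j hij => by
    simpa [reserved, hd.ne', Fin.val_inj] using hij
  have hle : univ.image reserved ⊆ Icc 1 #(outerEdges G K) := by
    intro k hk
    obtain ⟨i, -, rfl⟩ := mem_image.1 hk
    have hi : d * (i + 1) ≤ d * #Kᶜ := Nat.mul_le_mul_left d i.2
    exact mem_Icc.2 ⟨by simp [reserved], by simp only [reserved]; linarith⟩
  obtain ⟨h, hext⟩ := exists_forall_extend_injOn_mapsTo (spoke_injective hgK)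
    (spoke_mem_outerEdges hadj) hle (by simp [card_image_of_injective _ hreserved, hcompl])
    (by simp)
  obtain ⟨e, he⟩ := exists_equiv_fin_monotone hcompl
    fun w => ∑ v ∈ (G.neighborFinset w).erase (g w), h s(↑w, v)
  obtain ⟨hinj, hmaps⟩ := hext (reserved ∘ e.symm) (hreserved.comp e.symm.injective) (by simp)
  refine ⟨_, ⟨hinj, hmaps⟩, fun u hu v hv hne => ?_⟩
  have hspread := isSpreadOn_add_mul_rank he d 1 (Set.mem_univ ⟨u, hu⟩) (Set.mem_univ ⟨v, hv⟩)
    (by simpa using hne)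
  have hsum := vertexSum_extend_spoke hgK hadj (reserved ∘ e.symm) h
  beta_reduce
  rwa [hsum ⟨u, hu⟩, hsum ⟨v, hv⟩]

section Piecewise

variable (t f : Sym2 V → ℕ)

theorem vertexSum_piecewise_of_notMem {w : V} (hw : w ∉ K) :
    vertexSum G (K.sym2.piecewise t f) w = vertexSum G f w :=
  sum_congr rfl fun v _ => piecewise_eq_of_notMem _ _ _ (by simp [hw])

theorem vertexSum_piecewise_of_mem (hK : G.IsClique K) {u : V} (hu : u ∈ K) :
    vertexSum G (K.sym2.piecewise t f) u = outerSum G K f u + ∑ v ∈ K.erase u, t s(u, v) := by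
  have hinter : G.neighborFinset u ∩ K = K.erase u := by
    ext v
    simp only [mem_inter, SimpleGraph.mem_neighborFinset, mem_erase]
    exact ⟨fun ⟨hadj, hv⟩ => ⟨hadj.ne', hv⟩, fun ⟨hne, hv⟩ => ⟨hK hu hv hne.symm, hv⟩⟩
  rw [vertexSum, ← sum_inter_add_sum_sdiff _ K, hinter, add_comm]
  congr 1
  · exact sum_congr rfl fun v hv =>
      piecewise_eq_of_notMem _ _ _ (by simp [(mem_sdiff.1 hv).2])
  · exact sum_congr rfl fun v hv =>
      piecewise_eq_of_mem _ _ _ (by simp [hu, mem_of_mem_erase hv])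

variable {t f}

theorem IsOuterLabelling.injOn_piecewise (hf : IsOuterLabelling G K f)
    (ht : Set.InjOn t ↑(G.edgeFinset ∩ K.sym2))
    (htlt : ∀ e ∈ G.edgeFinset ∩ K.sym2, #(outerEdges G K) < t e) :
    Set.InjOn (K.sym2.piecewise t f) G.edgeFinset := by
  have houter {e : Sym2 V} (he : e ∈ outerEdges G K) : K.sym2.piecewise t f e = f e :=
    piecewise_eq_of_notMem _ _ _ (mem_sdiff.1 he).2
  have hinner {e : Sym2 V} (he : e ∈ G.edgeFinset ∩ K.sym2) : K.sym2.piecewise t f e = t e :=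
    piecewise_eq_of_mem _ _ _ (mem_inter.1 he).2
  rw [← sdiff_union_inter G.edgeFinset K.sym2, coe_union,
    Set.injOn_union (disjoint_coe.2 (disjoint_sdiff_inter _ _))]
  refine ⟨hf.injOn.congr fun e he => (houter he).symm, ht.congr fun e he => (hinner he).symm, ?_⟩
  intro e he e' he'
  rw [houter he, hinner he']
  exact ((mem_Icc.1 (hf.mapsTo he)).2.trans_lt (htlt e' he')).ne

theorem IsOuterLabelling.isCAntimagic_of_isClique {C : ℕ} (hf : IsOuterLabelling G K f)
    (hK : G.IsClique K) (hfsum : Set.InjOn (vertexSum G f) (↑K)ᶜ)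
    (ht : Set.InjOn t ↑(G.edgeFinset ∩ K.sym2))
    (htrange : ∀ e ∈ G.edgeFinset ∩ K.sym2, t e ∈ Ioc #(outerEdges G K) (#G.edgeFinset + C))
    (htsum : Set.InjOn (fun u => outerSum G K f u + ∑ v ∈ K.erase u, t s(u, v)) K)
    (hne : ∀ u ∈ K, outerSum G K f u + ∑ v ∈ K.erase u, t s(u, v) ∉ vertexSum G f '' (↑K)ᶜ) :
    IsCAntimagic G C := by
  refine ⟨K.sym2.piecewise t f,
    hf.injOn_piecewise ht fun e he => (mem_Ioc.1 (htrange e he)).1, ?_, ?_⟩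
  · intro e he
    by_cases heK : e ∈ K.sym2
    · have := mem_Ioc.1 (htrange e (mem_inter.2 ⟨he, heK⟩))
      rw [piecewise_eq_of_mem _ _ _ heK, mem_Icc]
      omega
    · have := mem_Icc.1 (hf.mapsTo (mem_sdiff.2 ⟨he, heK⟩))
      have := card_outerEdges_add_card_inter (G := G) (K := K)
      rw [piecewise_eq_of_notMem _ _ _ heK, mem_Icc]
      omega
  · change Function.Injective (vertexSum G (K.sym2.piecewise t f))
    rw [← Set.injOn_univ, ← Set.union_compl_self (K : Set V),
      Set.injOn_union disjoint_compl_right]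
    refine ⟨htsum.congr fun u hu => (vertexSum_piecewise_of_mem t f hK hu).symm,
      hfsum.congr fun w hw => (vertexSum_piecewise_of_notMem t f hw).symm, ?_⟩
    intro u hu w hw heq
    rw [vertexSum_piecewise_of_mem t f hK hu, vertexSum_piecewise_of_notMem t f hw] at heq
    exact hne u hu ⟨w, hw, heq.symm⟩

end Piecewise

section Triangle

variable {f : Sym2 V → ℕ} {a b c : V}

theorem edgeFinset_inter_sym2_triple (hclique : G.IsClique ↑({a, b, c} : Finset V))
    (hab : a ≠ b) (hac : a ≠ c) (hbc : b ≠ c) :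
    G.edgeFinset ∩ ({a, b, c} : Finset V).sym2 = {s(a, b), s(a, c), s(b, c)} := by
  have hGab : G.Adj a b := hclique (by simp) (by simp) hab
  have hGac : G.Adj a c := hclique (by simp) (by simp) hac
  have hGbc : G.Adj b c := hclique (by simp) (by simp) hbc
  ext e
  induction e using Sym2.ind with
  | _ u v =>
    simp only [mem_inter, SimpleGraph.mem_edgeFinset, SimpleGraph.mem_edgeSet, mk_mem_sym2_iff,
      mem_insert, mem_singleton, Sym2.eq_iff]
    constructor
    · rintro ⟨huv, hu, hv⟩
      have := huv.ne
      grind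
    · grind [G.adj_comm]

theorem card_outerEdges_add_three (hclique : G.IsClique K) (hcard : #K = 3) :
    #(outerEdges G K) + 3 = #G.edgeFinset := by
  obtain ⟨a, b, c, hab, hac, hbc, rfl⟩ := card_eq_three.1 hcard
  rw [← card_outerEdges_add_card_inter (K := {a, b, c}),
    edgeFinset_inter_sym2_triple hclique hab hac hbc]
  congr 1
  refine (card_eq_three.2 ⟨_, _, _, ?_, ?_, ?_, rfl⟩).symm <;>
    simp only [ne_eq, Sym2.eq_iff] <;> grind

theorem IsOuterLabelling.isCAntimagic_of_eq_triple {C p q r : ℕ} (hf : IsOuterLabelling G K f)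
    (hclique : G.IsClique K) (hab : a ≠ b) (hac : a ≠ c) (hbc : b ≠ c) (hK : K = {a, b, c})
    (hfsum : Set.InjOn (vertexSum G f) (↑K)ᶜ)
    (hp : #(outerEdges G K) < p) (hpq : p < q) (hqr : q < r) (hr : r ≤ #G.edgeFinset + C)
    (hle_ab : outerSum G K f a ≤ outerSum G K f b) (hle_bc : outerSum G K f b ≤ outerSum G K f c)
    (hne_a : outerSum G K f a + (p + q) ∉ vertexSum G f '' (↑K)ᶜ)
    (hne_b : outerSum G K f b + (p + r) ∉ vertexSum G f '' (↑K)ᶜ)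
    (hne_c : outerSum G K f c + (q + r) ∉ vertexSum G f '' (↑K)ᶜ) :
    IsCAntimagic G C := by
  subst hK
  obtain ⟨t, rfl, rfl, rfl⟩ := exists_labelling_triple hab hac hbc p q r
  have hsum_a : ∑ v ∈ ({a, b, c} : Finset V).erase a, t s(a, v) = t s(a, b) + t s(a, c) :=
    sum_erase_triple hab hac hbc _
  have hsum_b : ∑ v ∈ ({a, b, c} : Finset V).erase b, t s(b, v) = t s(a, b) + t s(b, c) := by
    rw [insert_comm, sum_erase_triple hab.symm hbc hac, Sym2.eq_swap]
  have hsum_c : ∑ v ∈ ({a, b, c} : Finset V).erase c, t s(c, v) = t s(a, c) + t s(b, c) := by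
    rw [pair_comm, insert_comm, sum_erase_triple hac.symm hbc.symm hab, Sym2.eq_swap,
      Sym2.eq_swap (a := c)]
  have hinner := edgeFinset_inter_sym2_triple hclique hab hac hbc
  refine hf.isCAntimagic_of_isClique hclique hfsum (t := t) ?_ ?_ ?_ ?_
  · rw [hinner]
    intro e he e' he' heq
    simp only [coe_insert, coe_singleton, Set.mem_insert_iff, Set.mem_singleton_iff] at he he'
    grind
  · rw [hinner]
    simp only [mem_insert, mem_singleton, forall_eq_or_imp, forall_eq, mem_Ioc]
    omega
  · have hlt_ab : outerSum G {a, b, c} f a + (t s(a, b) + t s(a, c)) <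
        outerSum G {a, b, c} f b + (t s(a, b) + t s(b, c)) := by omega
    have hlt_bc : outerSum G {a, b, c} f b + (t s(a, b) + t s(b, c)) <
        outerSum G {a, b, c} f c + (t s(a, c) + t s(b, c)) := by omega
    intro u hu v hv heq
    simp only [coe_insert, coe_singleton, Set.mem_insert_iff, Set.mem_singleton_iff] at hu hv
    grind
  · intro u hu
    simp only [mem_insert, mem_singleton] at hu
    obtain rfl | rfl | rfl := hu
    · rwa [hsum_a]
    · rwa [hsum_b]
    · rwa [hsum_c]

theorem IsOuterLabelling.isCAntimagic_three_of_isSpreadOn (hf : IsOuterLabelling G K f)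
    (hclique : G.IsClique K) (hcard : #K = 3) (hspread : IsSpreadOn 3 (vertexSum G f) (↑K)ᶜ) :
    IsCAntimagic G 3 := by
  have hedges := card_outerEdges_add_three hclique hcard
  obtain ⟨a, b, c, hab, hac, hbc, hK, hle_ab, hle_bc⟩ :=
    exists_eq_triple_le_le hcard (outerSum G K f)
  set A := outerSum G K f
  set M := #(outerEdges G K)
  obtain ⟨x, y, z, hxy, hyz, hz, hne_a, hne_b, hne_c⟩ := exists_offsets_notMem hspread.image_id
    (A a + 2 * (M + 1)) (A b + 2 * (M + 1)) (A c + 2 * (M + 1))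
  have regroup (n i j : ℕ) : n + 2 * (M + 1) + i + j = n + (M + 1 + i + (M + 1 + j)) := by ring
  rw [regroup] at hne_a hne_b hne_c
  exact hf.isCAntimagic_of_eq_triple hclique hab hac hbc hK (hspread.injOn three_pos)
    (by omega) (by omega) (by omega) (by omega) hle_ab hle_bc hne_a hne_b hne_c

end Triangle

end Graph

/-- If a graph `G` with `n` vertices and `m` edges has a dominating triangle (a
dominating clique of order `3`) and `m ≥ 3(n - 3) + 1`, then `G` is `3`-antimagic. -/
theorem three_antimagic_of_dominating_triangle {V : Type*} [Fintype V] [DecidableEq V]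
    (G : SimpleGraph V) [DecidableRel G.Adj] (K : Finset V)
    (hclique : G.IsClique ↑K) (hcard : K.card = 3)
    (hdom : ∀ v ∉ K, ∃ u ∈ K, G.Adj v u)
    (hm : 3 * ((Fintype.card V : ℤ) - 3) + 1 ≤ (G.edgeFinset.card : ℤ)) :
    IsCAntimagic G 3 := by
  have hcompl : #Kᶜ + #K = Fintype.card V := card_compl_add_card K
  have hedges := card_outerEdges_add_three hclique hcard
  obtain ⟨f, hf, hspread⟩ := exists_isSpreadOn_vertexSum_compl three_pos hdom (by omega)
  exact hf.isCAntimagic_three_of_isSpreadOn hclique hcard hspread
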